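/- The unique stationary distribution π'_∞ of P'_∞ is uniform on the Eulerian states of ℛ: there is a constant λ > 0 such that π'_∞(A,v,v) = λ for every v ∈ V and every fully-packed configuration A ∈ F_𝐇, and consequently π'_∞(A,v,v) / Σ_{v'∈V} Σ_{A'∈F_𝐇} π'_∞(A',v',v') = 1/(|V| · |F_𝐇|), i.e. the chain observed on the Eulerian subspace samples the uniform distribution on fully-packed loop configurations. -/

import Mathlib

attribute [local instance] Classical.propDecidable

namespace FPL

/-- Vertices of the brick-wall honeycomb lattice with periodic boundary conditions. -/
abbrev Vtx (m n : ℕ) := ZMod m × ZMod n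

/-- Adjacency on the brick-wall honeycomb lattice: horizontal edges between `(i,j)` and
`(i+1,j)`, and vertical edges between `(i,j)` and `(i,j+1)` whenever `i+j` is even. -/
def HoneyAdj (m n : ℕ) (x y : Vtx m n) : Prop :=
  (x.2 = y.2 ∧ (y.1 = x.1 + 1 ∨ x.1 = y.1 + 1)) ∨
  (x.1 = y.1 ∧ ((y.2 = x.2 + 1 ∧ Even (x.1.val + x.2.val)) ∨
                (x.2 = y.2 + 1 ∧ Even (y.1.val + y.2.val))))

variable (m n : ℕ) [NeZero m] [NeZero n]

/-- The edge set of the brick-wall honeycomb lattice. -/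
noncomputable def honeyEdges : Finset (Sym2 (Vtx m n)) :=
  Finset.image (fun p : Vtx m n × Vtx m n => s(p.1, p.2))
    (Finset.univ.filter fun p => HoneyAdj m n p.1 p.2)

/-- `bdeg m n A x` is the degree of the vertex `x` in the spanning subgraph `(V, A)`. -/
noncomputable def bdeg (A : Finset (Sym2 (Vtx m n))) (x : Vtx m n) : ℕ :=
  (A.filter fun e => x ∈ e).card

/-- `(A,u,v)` is a state of the worm chain: `A ⊆ E`, and the set of odd-degree vertices of
`(V,A)` is `{u,v}` if `u ≠ v`, and is empty if `u = v`. -/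
def IsWormState (A : Finset (Sym2 (Vtx m n))) (u v : Vtx m n) : Prop :=
  A ⊆ honeyEdges m n ∧ ∀ x, (Odd (bdeg m n A x) ↔ ((x = u ∨ x = v) ∧ u ≠ v))

/-- The worm state space `𝒮`. -/
abbrev WormState := {p : Finset (Sym2 (Vtx m n)) × Vtx m n × Vtx m n //
  IsWormState m n p.1 p.2.1 p.2.2}

/-- The set `ℛ` of states with no isolated vertices. -/
def FullSupport (st : WormState m n) : Prop := ∀ x : Vtx m n, bdeg m n st.1.1 x ≠ 0

/-- The fully-packed worm transition matrix `P'_∞`. -/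
noncomputable def Pinf : Matrix (WormState m n) (WormState m n) ℝ := fun st tt =>
  if st.1.2.1 = st.1.2.2 then
    (if tt = st then (bdeg m n st.1.1 st.1.2.2 : ℝ) / 3 else 0) +
    (if ∃ v' : Vtx m n, HoneyAdj m n st.1.2.2 v' ∧ s(st.1.2.2, v') ∉ st.1.1 ∧
        tt.1.1 = insert s(st.1.2.2, v') st.1.1 ∧
        ((tt.1.2.1 = v' ∧ tt.1.2.2 = st.1.2.2) ∨ (tt.1.2.1 = st.1.2.2 ∧ tt.1.2.2 = v'))
      then 1/6 else 0)
  else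
    (if bdeg m n st.1.1 st.1.2.1 = 3 ∧ ∃ u' : Vtx m n, HoneyAdj m n st.1.2.1 u' ∧
        s(st.1.2.1, u') ∈ st.1.1 ∧ tt.1.1 = st.1.1.erase s(st.1.2.1, u') ∧
        tt.1.2.1 = u' ∧ tt.1.2.2 = st.1.2.2 then 1/6 else 0) +
    (if bdeg m n st.1.1 st.1.2.1 = 1 ∧ ∃ u' : Vtx m n, HoneyAdj m n st.1.2.1 u' ∧
        s(st.1.2.1, u') ∉ st.1.1 ∧ tt.1.1 = insert s(st.1.2.1, u') st.1.1 ∧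
        tt.1.2.1 = u' ∧ tt.1.2.2 = st.1.2.2 then 1/4 else 0) +
    (if bdeg m n st.1.1 st.1.2.2 = 3 ∧ ∃ v' : Vtx m n, HoneyAdj m n st.1.2.2 v' ∧
        s(st.1.2.2, v') ∈ st.1.1 ∧ tt.1.1 = st.1.1.erase s(st.1.2.2, v') ∧
        tt.1.2.1 = st.1.2.1 ∧ tt.1.2.2 = v' then 1/6 else 0) +
    (if bdeg m n st.1.1 st.1.2.2 = 1 ∧ ∃ v' : Vtx m n, HoneyAdj m n st.1.2.2 v' ∧
        s(st.1.2.2, v') ∉ st.1.1 ∧ tt.1.1 = insert s(st.1.2.2, v') st.1.1 ∧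
        tt.1.2.1 = st.1.2.1 ∧ tt.1.2.2 = v' then 1/4 else 0)

/-- `st → tt`: some power of `P'_∞` has positive `(st,tt)` entry. -/
def Reaches (st tt : WormState m n) : Prop := ∃ k : ℕ, 0 < (Pinf m n ^ k) st tt

/-- `st ↔ tt`: mutual reachability. -/
def Comm (st tt : WormState m n) : Prop := Reaches m n st tt ∧ Reaches m n tt st

/-- The fully-packed configuration consisting of all horizontal edges. -/
noncomputable def Hconfig : Finset (Sym2 (Vtx m n)) :=
  Finset.image (fun p : Vtx m n => s(p, (p.1 + 1, p.2))) Finset.univ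

section Helpers

set_option linter.unusedSectionVars false

variable {m n : ℕ} [NeZero m] [NeZero n]

/-- The standing assumptions on the lattice size. -/
structure Good (m n : ℕ) : Prop where
  hm : Even m
  hn : Even n
  hm4 : 4 ≤ m
  hn4 : 4 ≤ n

/-- An abstract uniqueness principle: super-stationary vectors are stationary. -/
theorem superstat {S : Type*} [Fintype S] (P : S → S → ℝ)
    (hrow : ∀ s, ∑ t, P s t ≤ 1) (μ : S → ℝ) (hμ : ∀ s, 0 ≤ μ s)
    (h : ∀ t, μ t ≤ ∑ s, μ s * P s t) (t : S) : ∑ s, μ s * P s t = μ t := by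
  have h1 : ∑ t, (∑ s, μ s * P s t - μ t) ≤ 0 := by
    rw [Finset.sum_sub_distrib, Finset.sum_comm]
    have : ∑ s, ∑ t, μ s * P s t ≤ ∑ s, μ s := by
      refine Finset.sum_le_sum fun s _ => ?_
      rw [← Finset.mul_sum]
      exact mul_le_of_le_one_right (hμ s) (hrow s)
    linarith
  have h2 : ∀ t ∈ Finset.univ, 0 ≤ ∑ s, μ s * P s t - μ t := fun t _ => by
    have := h t
    linarith
  have h3 := (Finset.sum_eq_zero_iff_of_nonneg h2).1 (le_antisymm h1 (Finset.sum_nonneg h2)) t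
    (Finset.mem_univ t)
  linarith

theorem unique_stat {S : Type*} [Fintype S] (P : S → S → ℝ) (hP : ∀ s t, 0 ≤ P s t)
    (hrow : ∀ s, ∑ t, P s t ≤ 1) (μ ν : S → ℝ) (hμ : ∀ s, 0 ≤ μ s)
    (h : ∀ t, μ t ≤ ∑ s, μ s * P s t) (hν : ∀ t, ∑ s, ν s * P s t = ν t)
    (s0 : S) (hs0 : 0 < μ s0)
    (hreach : ∀ K : Set S, K.Nonempty → (∀ s ∈ K, ∀ t, 0 < P s t → t ∈ K) → s0 ∈ K) :
    ∀ s, ν s = (ν s0 / μ s0) * μ s := by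
  have hst := superstat P hrow μ hμ h
  set c := ν s0 / μ s0 with hc
  set δ : S → ℝ := fun s => ν s - c * μ s with hδ
  have hδst : ∀ t, ∑ s, δ s * P s t = δ t := by
    intro t
    simp only [hδ, sub_mul, Finset.sum_sub_distrib, mul_assoc, ← Finset.mul_sum, hst, hν]
  have habs := superstat P hrow (fun s => |δ s|) (fun s => abs_nonneg _) (by
    intro t
    calc |δ t| = |∑ s, δ s * P s t| := by rw [hδst]
      _ ≤ ∑ s, |δ s * P s t| := Finset.abs_sum_le_sum_abs _ _
      _ = ∑ s, |δ s| * P s t := by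
        refine Finset.sum_congr rfl fun s _ => ?_
        rw [abs_mul, abs_of_nonneg (hP s t)])
  have hz : δ s0 = 0 := by
    simp only [hδ, hc]
    field_simp
    ring
  by_contra hcon
  push Not at hcon
  obtain ⟨s1, hs1⟩ := hcon
  have := hreach {s | δ s ≠ 0} ⟨s1, sub_ne_zero.2 hs1⟩ (by
    intro s hs t hst' 
    have h1 : |δ s| * P s t ≤ |δ t| := by
      rw [← habs t]
      exact Finset.single_le_sum (f := fun s => |δ s| * P s t)
        (fun s _ => mul_nonneg (abs_nonneg _) (hP s t)) (Finset.mem_univ s)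
    have h2 : 0 < |δ s| * P s t := mul_pos (abs_pos.2 hs) hst'
    exact abs_pos.1 (lt_of_lt_of_le h2 h1))
  exact this hz

/-! ### The lattice -/

theorem val_succ_even {k : ℕ} [NeZero k] (hk : Even k) (a : ZMod k) :
    Even (a + 1).val ↔ ¬ Even a.val := by
  obtain ⟨r, hr⟩ := hk
  have hk0 := NeZero.ne k
  rw [ZMod.val_add, ZMod.val_one_eq_one_mod]
  have h1 : (1 : ℕ) % k = 1 := Nat.mod_eq_of_lt (by omega)
  have h2 := a.val_lt
  rw [h1]
  by_cases h : a.val + 1 = k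
  · rw [h, Nat.mod_self]
    simp only [Nat.even_iff]
    clear h1
    constructor <;> intro _ <;> first | trivial | omega
  · rw [Nat.mod_eq_of_lt (by omega)]
    simp only [Nat.even_iff]
    constructor <;> intro _ <;> omega

/-- Sublattice of a vertex. -/
def Ev (x : Vtx m n) : Prop := Even (x.1.val + x.2.val)

theorem ev_h (g : Good m n) (i : ZMod m) (j : ZMod n) : Ev ((i + 1, j) : Vtx m n) ↔ ¬ Ev ((i, j) : Vtx m n) := by
  have := val_succ_even g.hm i
  simp only [Ev, Nat.even_add] at *
  tauto

theorem ev_v (g : Good m n) (i : ZMod m) (j : ZMod n) : Ev ((i, j + 1) : Vtx m n) ↔ ¬ Ev ((i, j) : Vtx m n) := by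
  have := val_succ_even g.hn j
  simp only [Ev, Nat.even_add] at *
  tauto

def hr (x : Vtx m n) : Vtx m n := (x.1 + 1, x.2)
def hl (x : Vtx m n) : Vtx m n := (x.1 - 1, x.2)
noncomputable def ve (x : Vtx m n) : Vtx m n := if Ev x then (x.1, x.2 + 1) else (x.1, x.2 - 1)

theorem ev_hr (g : Good m n) (x : Vtx m n) : Ev (hr x) ↔ ¬ Ev x := ev_h g x.1 x.2
theorem ev_hl (g : Good m n) (x : Vtx m n) : Ev (hl x) ↔ ¬ Ev x := by
  have := ev_h g (x.1 - 1) x.2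
  rw [sub_add_cancel] at this
  have h2 : Ev x ↔ ¬ Ev (hl x) := this
  tauto
theorem ev_ve (g : Good m n) (x : Vtx m n) : Ev (ve x) ↔ ¬ Ev x := by
  unfold ve
  split_ifs with h
  · exact ev_v g x.1 x.2
  · have := ev_v g x.1 (x.2 - 1)
    rw [sub_add_cancel] at this
    have h2 : Ev x ↔ ¬ Ev ((x.1, x.2 - 1) : Vtx m n) := this
    tauto

theorem adj_iff (g : Good m n) (x y : Vtx m n) :
    HoneyAdj m n x y ↔ y = hr x ∨ y = hl x ∨ y = ve x := by
  obtain ⟨i, j⟩ := x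
  obtain ⟨a, b⟩ := y
  have e1 := ev_v g i b
  have e2 : Ev ((i, b) : Vtx m n) = Even (i.val + b.val) := rfl
  have e3 : Ev ((i, j) : Vtx m n) = Even (i.val + j.val) := rfl
  have e4 := ev_v g i j
  have k1 : (b = j - 1) ↔ (j = b + 1) := by
    constructor <;> rintro rfl <;> simp
  have k2 : (a = i - 1) ↔ (i = a + 1) := by
    constructor <;> rintro rfl <;> simp
  rw [e2] at e1
  rw [e3] at e4
  unfold HoneyAdj hr hl ve
  rw [e3]
  dsimp only
  by_cases h : Even (i.val + j.val)
  · rw [if_pos h]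
    simp only [Prod.mk.injEq, k2]
    constructor
    · rintro (⟨h0, h1 | h1⟩ | ⟨h0, ⟨h1, h2⟩ | ⟨h1, h2⟩⟩)
      · exact Or.inl ⟨h1, h0.symm⟩
      · exact Or.inr (Or.inl ⟨h1, h0.symm⟩)
      · exact Or.inr (Or.inr ⟨h0.symm, h1⟩)
      · exfalso
        rw [← h0] at h2
        subst h1
        exact e1.1 h h2
    · rintro (⟨h1, h0⟩ | ⟨h1, h0⟩ | ⟨h0, h1⟩)
      · exact Or.inl ⟨h0.symm, Or.inl h1⟩
      · exact Or.inl ⟨h0.symm, Or.inr h1⟩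
      · exact Or.inr ⟨h0.symm, Or.inl ⟨h1, h⟩⟩
  · rw [if_neg h]
    simp only [Prod.mk.injEq, k2, k1]
    constructor
    · rintro (⟨h0, h1 | h1⟩ | ⟨h0, ⟨h1, h2⟩ | ⟨h1, h2⟩⟩)
      · exact Or.inl ⟨h1, h0.symm⟩
      · exact Or.inr (Or.inl ⟨h1, h0.symm⟩)
      · exact absurd h2 h
      · exact Or.inr (Or.inr ⟨h0.symm, h1⟩)
    · rintro (⟨h1, h0⟩ | ⟨h1, h0⟩ | ⟨h0, h1⟩)
      · exact Or.inl ⟨h0.symm, Or.inl h1⟩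
      · exact Or.inl ⟨h0.symm, Or.inr h1⟩
      · refine Or.inr ⟨h0.symm, Or.inr ⟨h1, ?_⟩⟩
        rw [h0]
        by_contra h3
        subst h1
        exact h (e1.2 h3)

theorem one_ne_neg_one' {k : ℕ} (hk : 4 ≤ k) : (1 : ZMod k) ≠ -1 := by
  intro h
  have h2 : ((2 : ℕ) : ZMod k) = 0 := by
    push_cast
    calc (2 : ZMod k) = 1 + 1 := by norm_num
      _ = -1 + 1 := by rw [← h]
      _ = 0 := by ring
  rw [ZMod.natCast_eq_zero_iff] at h2
  have := Nat.le_of_dvd (by norm_num) h2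
  omega

theorem one_ne_zero' {k : ℕ} (hk : 4 ≤ k) : (1 : ZMod k) ≠ 0 := by
  intro h
  have := one_ne_neg_one' hk
  rw [h] at this
  simp at this

theorem hr_ne_hl (g : Good m n) (x : Vtx m n) : hr x ≠ hl x := by
  intro h
  have h1 := congrArg Prod.fst h
  simp only [hr, hl, sub_eq_add_neg] at h1
  exact one_ne_neg_one' g.hm4 (add_left_cancel h1)

theorem ve_snd (g : Good m n) (x : Vtx m n) : (ve x).2 ≠ x.2 := by
  have := one_ne_zero' g.hn4
  unfold ve
  split_ifs
  · simpa using this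
  · simpa using this

theorem ve_fst (x : Vtx m n) : (ve x).1 = x.1 := by
  unfold ve; split_ifs <;> rfl

theorem hr_ne_ve (g : Good m n) (x : Vtx m n) : hr x ≠ ve x := fun h =>
  ve_snd g x (congrArg Prod.snd h).symm
theorem hl_ne_ve (g : Good m n) (x : Vtx m n) : hl x ≠ ve x := fun h =>
  ve_snd g x (congrArg Prod.snd h).symm

theorem ve_ve (g : Good m n) (x : Vtx m n) : ve (ve x) = x := by
  have h := ev_ve g x
  by_cases hx : Ev x
  · have h1 : ve x = (x.1, x.2 + 1) := if_pos hx
    rw [ve, if_neg (by tauto), h1]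
    simp
  · have h1 : ve x = (x.1, x.2 - 1) := if_neg hx
    rw [ve, if_pos (by tauto), h1]
    simp

theorem hl_hr (x : Vtx m n) : hl (hr x) = x := by simp [hl, hr]
theorem hr_hl (x : Vtx m n) : hr (hl x) = x := by simp [hl, hr]

theorem adj_symm (g : Good m n) {x y : Vtx m n} (h : HoneyAdj m n x y) : HoneyAdj m n y x := by
  rw [adj_iff g] at *
  rcases h with rfl | rfl | rfl
  · simp [hl_hr]
  · simp [hr_hl]
  · simp [ve_ve g]

theorem adj_ev (g : Good m n) {x y : Vtx m n} (h : HoneyAdj m n x y) : Ev y ↔ ¬ Ev x := by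
  rw [adj_iff g] at h
  rcases h with rfl | rfl | rfl
  · exact ev_hr g x
  · exact ev_hl g x
  · exact ev_ve g x

theorem adj_ne (g : Good m n) {x y : Vtx m n} (h : HoneyAdj m n x y) : x ≠ y := by
  rintro rfl
  have := adj_ev g h
  tauto

theorem adj_hr (g : Good m n) (x : Vtx m n) : HoneyAdj m n x (hr x) := by simp [adj_iff g]
theorem adj_hl (g : Good m n) (x : Vtx m n) : HoneyAdj m n x (hl x) := by simp [adj_iff g]
theorem adj_ve (g : Good m n) (x : Vtx m n) : HoneyAdj m n x (ve x) := by simp [adj_iff g]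

/-- Neighbours. -/
noncomputable def Nb (x : Vtx m n) : Finset (Vtx m n) := Finset.univ.filter (HoneyAdj m n x)

theorem mem_Nb {x y : Vtx m n} : y ∈ Nb x ↔ HoneyAdj m n x y := by simp [Nb]

theorem Nb_eq (g : Good m n) (x : Vtx m n) : Nb x = {hr x, hl x, ve x} := by
  ext y
  simp [mem_Nb, adj_iff g]

theorem Nb_card (g : Good m n) (x : Vtx m n) : (Nb x).card = 3 := by
  rw [Nb_eq g]
  exact Finset.card_eq_three.2 ⟨_, _, _, hr_ne_hl g x, hr_ne_ve g x, hl_ne_ve g x, rfl⟩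

theorem mem_edges (g : Good m n) {x y : Vtx m n} :
    s(x, y) ∈ honeyEdges m n ↔ HoneyAdj m n x y := by
  simp only [honeyEdges, Finset.mem_image, Finset.mem_filter, Finset.mem_univ, true_and]
  constructor
  · rintro ⟨⟨a, b⟩, h, h2⟩
    rcases Sym2.eq_iff.1 h2 with ⟨rfl, rfl⟩ | ⟨rfl, rfl⟩
    · exact h
    · exact adj_symm g h
  · intro h
    exact ⟨(x, y), h, rfl⟩

theorem conn (g : Good m n) (Q : Vtx m n → Prop) (x0 : Vtx m n) (h0 : Q x0)
    (h : ∀ x y, HoneyAdj m n x y → Q x → Q y) (x : Vtx m n) : Q x := by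
  have row : ∀ j i i', Q (i, j) → Q (i', j) := by
    intro j i i' hq
    have : ∀ k : ℕ, Q (i + k, j) := by
      intro k
      induction k with
      | zero => simpa using hq
      | succ k ih =>
        have := h _ _ (adj_hr g _) ih
        simpa [hr, add_assoc] using this
    have h2 := this (i' - i).val
    simpa using h2
  have col : ∀ i j, Q (i, j) → Q (i, j + 1) := by
    intro i j hq
    by_cases he : Ev ((i, j) : Vtx m n)
    · have := h _ _ (adj_ve g _) hq
      rwa [ve, if_pos he] at this
    · have he2 : Ev ((i + 1, j) : Vtx m n) := by rw [ev_h g]; exact he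
      have := h _ _ (adj_ve g _) (row j i (i + 1) hq)
      rw [ve, if_pos he2] at this
      exact row _ _ _ this
  have col2 : ∀ (k : ℕ), Q (x0.1, x0.2 + k) := by
    intro k
    induction k with
    | zero => simpa using h0
    | succ k ih =>
      have := col _ _ ih
      simpa [add_assoc] using this
  have h2 := col2 (x.2 - x0.2).val
  have h3 := row _ _ x.1 h2
  simpa using h3

/-! ### Degrees -/

theorem bdeg_insert {A : Finset (Sym2 (Vtx m n))} {e : Sym2 (Vtx m n)} (h : e ∉ A) (x : Vtx m n) :
    bdeg m n (insert e A) x = bdeg m n A x + if x ∈ e then 1 else 0 := by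
  unfold bdeg
  rw [Finset.filter_insert]
  split_ifs with hx
  · rw [Finset.card_insert_of_notMem]
    exact fun h' => h (Finset.mem_filter.1 h').1
  · rfl

theorem bdeg_erase {A : Finset (Sym2 (Vtx m n))} {e : Sym2 (Vtx m n)} (h : e ∈ A) (x : Vtx m n) :
    bdeg m n A x = bdeg m n (A.erase e) x + if x ∈ e then 1 else 0 := by
  rw [← bdeg_insert (Finset.notMem_erase e A), Finset.insert_erase h]

theorem bdeg_eq (g : Good m n) {A : Finset (Sym2 (Vtx m n))} (hA : A ⊆ honeyEdges m n)
    (x : Vtx m n) : bdeg m n A x = ((Nb x).filter fun w => s(x, w) ∈ A).card := by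
  unfold bdeg
  have : (A.filter fun e => x ∈ e) = ((Nb x).filter fun w => s(x, w) ∈ A).image
      fun w => s(x, w) := by
    ext e
    simp only [Finset.mem_filter, Finset.mem_image, mem_Nb]
    constructor
    · rintro ⟨he, hx⟩
      obtain ⟨w, rfl⟩ := hx
      exact ⟨w, ⟨(mem_edges g).1 (hA he), he⟩, rfl⟩
    · rintro ⟨w, ⟨_, hw⟩, rfl⟩
      exact ⟨hw, by simp⟩
  rw [this, Finset.card_image_of_injective]
  intro w w' h
  exact Sym2.congr_right.1 h

theorem missing_card (g : Good m n) {A : Finset (Sym2 (Vtx m n))} (hA : A ⊆ honeyEdges m n)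
    (x : Vtx m n) : ((Nb x).filter fun w => s(x, w) ∉ A).card + bdeg m n A x = 3 := by
  rw [bdeg_eq g hA, add_comm, Finset.card_filter_add_card_filter_not, Nb_card g]

theorem bdeg_three (g : Good m n) {A : Finset (Sym2 (Vtx m n))} (hA : A ⊆ honeyEdges m n)
    (x : Vtx m n) : bdeg m n A x = (if s(x, hr x) ∈ A then 1 else 0) +
      (if s(x, hl x) ∈ A then 1 else 0) + (if s(x, ve x) ∈ A then 1 else 0) := by
  rw [bdeg_eq g hA, Finset.card_filter, Nb_eq g, Finset.sum_insert, Finset.sum_insert,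
    Finset.sum_singleton, add_assoc]
  · simpa using hl_ne_ve g x
  · simpa using ⟨hr_ne_hl g x, hr_ne_ve g x⟩

/-! ### Worm states -/

theorem worm_iff {A : Finset (Sym2 (Vtx m n))} {u v : Vtx m n} :
    IsWormState m n A u v ↔ A ⊆ honeyEdges m n ∧
      ∀ x, (Odd (bdeg m n A x) ↔ ¬ (x = u ↔ x = v)) := by
  unfold IsWormState
  refine and_congr_right fun _ => forall_congr' fun x => iff_congr Iff.rfl ?_
  constructor
  · rintro ⟨rfl | rfl, h⟩ <;> tauto
  · intro h
    refine ⟨by tauto, ?_⟩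
    rintro rfl
    tauto

theorem worm_symm {A : Finset (Sym2 (Vtx m n))} {u v : Vtx m n} (h : IsWormState m n A u v) :
    IsWormState m n A v u := by
  rw [worm_iff] at *
  refine ⟨h.1, fun x => ?_⟩
  rw [h.2 x]
  tauto

theorem worm_insert (g : Good m n) {A : Finset (Sym2 (Vtx m n))} {u v u' : Vtx m n}
    (h : IsWormState m n A u v) (ha : HoneyAdj m n u u') (he : s(u, u') ∉ A) :
    IsWormState m n (insert s(u, u') A) u' v := by
  rw [worm_iff] at *
  refine ⟨?_, fun x => ?_⟩
  · intro e h'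
    rcases Finset.mem_insert.1 h' with rfl | h'
    · exact (mem_edges g).2 ha
    · exact h.1 h'
  · rw [bdeg_insert he]
    have h2 := h.2 x
    have h3 := adj_ne g ha
    by_cases hx : x ∈ s(u, u')
    · rw [if_pos hx, Nat.odd_add_one, h2]
      rcases Sym2.mem_iff.1 hx with rfl | rfl <;> tauto
    · rw [if_neg hx, add_zero, h2]
      rw [Sym2.mem_iff] at hx
      tauto

theorem worm_erase (g : Good m n) {A : Finset (Sym2 (Vtx m n))} {u v u' : Vtx m n}
    (h : IsWormState m n A u v) (ha : HoneyAdj m n u u') (he : s(u, u') ∈ A) :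
    IsWormState m n (A.erase s(u, u')) u' v := by
  rw [worm_iff] at *
  refine ⟨fun e h' => h.1 (Finset.mem_of_mem_erase h'), fun x => ?_⟩
  have h2 := h.2 x
  rw [bdeg_erase he] at h2
  have h3 := adj_ne g ha
  by_cases hx : x ∈ s(u, u')
  · rw [if_pos hx, Nat.odd_add_one] at h2
    rcases Sym2.mem_iff.1 hx with rfl | rfl <;> tauto
  · rw [if_neg hx, add_zero] at h2
    rw [h2]
    rw [Sym2.mem_iff] at hx
    tauto

/-! ### Bounds for the transition matrix -/

theorem ite_nn (p : Prop) [Decidable p] {c : ℝ} (hc : 0 ≤ c) : 0 ≤ if p then c else 0 := by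
  split_ifs
  · exact hc
  · exact le_rfl

theorem P_nonneg (s t : WormState m n) : 0 ≤ Pinf m n s t := by
  unfold Pinf
  split_ifs <;> positivity

theorem P_self (s : WormState m n) (h : s.1.2.1 = s.1.2.2) :
    (bdeg m n s.1.1 s.1.2.2 : ℝ) / 3 ≤ Pinf m n s s := by
  unfold Pinf
  rw [if_pos h]
  exact le_add_of_le_of_nonneg (le_of_eq (if_pos rfl).symm) (ite_nn _ (by norm_num))

theorem P_open (s t : WormState m n) (h : s.1.2.1 = s.1.2.2) (v' : Vtx m n)
    (ha : HoneyAdj m n s.1.2.2 v') (he : s(s.1.2.2, v') ∉ s.1.1)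
    (hA : t.1.1 = insert s(s.1.2.2, v') s.1.1)
    (ht : (t.1.2.1 = v' ∧ t.1.2.2 = s.1.2.2) ∨ (t.1.2.1 = s.1.2.2 ∧ t.1.2.2 = v')) :
    1 / 6 ≤ Pinf m n s t := by
  unfold Pinf
  rw [if_pos h]
  exact le_add_of_nonneg_of_le (ite_nn _ (by positivity))
    (le_of_eq (if_pos ⟨v', ha, he, hA, ht⟩).symm)

theorem P_u3 (s t : WormState m n) (h : s.1.2.1 ≠ s.1.2.2) (hd : bdeg m n s.1.1 s.1.2.1 = 3)
    (u' : Vtx m n) (ha : HoneyAdj m n s.1.2.1 u') (he : s(s.1.2.1, u') ∈ s.1.1)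
    (hA : t.1.1 = s.1.1.erase s(s.1.2.1, u')) (h1 : t.1.2.1 = u') (h2 : t.1.2.2 = s.1.2.2) :
    1 / 6 ≤ Pinf m n s t := by
  unfold Pinf
  rw [if_neg h]
  exact le_add_of_le_of_nonneg (le_add_of_le_of_nonneg (le_add_of_le_of_nonneg
    (le_of_eq (if_pos ⟨hd, u', ha, he, hA, h1, h2⟩).symm)
    (ite_nn _ (by norm_num))) (ite_nn _ (by norm_num))) (ite_nn _ (by norm_num))

theorem P_u1 (s t : WormState m n) (h : s.1.2.1 ≠ s.1.2.2) (hd : bdeg m n s.1.1 s.1.2.1 = 1)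
    (u' : Vtx m n) (ha : HoneyAdj m n s.1.2.1 u') (he : s(s.1.2.1, u') ∉ s.1.1)
    (hA : t.1.1 = insert s(s.1.2.1, u') s.1.1) (h1 : t.1.2.1 = u') (h2 : t.1.2.2 = s.1.2.2) :
    1 / 4 ≤ Pinf m n s t := by
  unfold Pinf
  rw [if_neg h]
  exact le_add_of_le_of_nonneg (le_add_of_le_of_nonneg (le_add_of_nonneg_of_le
    (ite_nn _ (by norm_num))
    (le_of_eq (if_pos ⟨hd, u', ha, he, hA, h1, h2⟩).symm))
    (ite_nn _ (by norm_num))) (ite_nn _ (by norm_num))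

theorem P_v3 (s t : WormState m n) (h : s.1.2.1 ≠ s.1.2.2) (hd : bdeg m n s.1.1 s.1.2.2 = 3)
    (v' : Vtx m n) (ha : HoneyAdj m n s.1.2.2 v') (he : s(s.1.2.2, v') ∈ s.1.1)
    (hA : t.1.1 = s.1.1.erase s(s.1.2.2, v')) (h1 : t.1.2.1 = s.1.2.1) (h2 : t.1.2.2 = v') :
    1 / 6 ≤ Pinf m n s t := by
  unfold Pinf
  rw [if_neg h]
  exact le_add_of_le_of_nonneg (le_add_of_nonneg_of_le (add_nonneg
    (ite_nn _ (by norm_num)) (ite_nn _ (by norm_num)))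
    (le_of_eq (if_pos ⟨hd, v', ha, he, hA, h1, h2⟩).symm))
    (ite_nn _ (by norm_num))

theorem P_v1 (s t : WormState m n) (h : s.1.2.1 ≠ s.1.2.2) (hd : bdeg m n s.1.1 s.1.2.2 = 1)
    (v' : Vtx m n) (ha : HoneyAdj m n s.1.2.2 v') (he : s(s.1.2.2, v') ∉ s.1.1)
    (hA : t.1.1 = insert s(s.1.2.2, v') s.1.1) (h1 : t.1.2.1 = s.1.2.1) (h2 : t.1.2.2 = v') :
    1 / 4 ≤ Pinf m n s t := by
  unfold Pinf
  rw [if_neg h]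
  exact le_add_of_nonneg_of_le (add_nonneg (add_nonneg
    (ite_nn _ (by norm_num)) (ite_nn _ (by norm_num))) (ite_nn _ (by norm_num)))
    (le_of_eq (if_pos ⟨hd, v', ha, he, hA, h1, h2⟩).symm)

/-! ### Row sums -/

theorem sum_ite_le (p : WormState m n → Prop) [DecidablePred p] {c : ℝ} (hc : 0 ≤ c)
    (S : Finset (Finset (Sym2 (Vtx m n)) × Vtx m n × Vtx m n))
    (h : ∀ s, p s → s.1 ∈ S) : ∑ t, (if p t then c else 0) ≤ c * S.card := by
  rw [← Finset.sum_filter, Finset.sum_const, nsmul_eq_mul, mul_comm]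
  refine mul_le_mul_of_nonneg_left ?_ hc
  rw [← Finset.card_image_of_injective _ Subtype.val_injective]
  exact_mod_cast Finset.card_le_card (by
    intro x hx
    obtain ⟨s, hs, rfl⟩ := Finset.mem_image.1 hx
    exact h s (Finset.mem_filter.1 hs).2)

theorem odd_cases (g : Good m n) {A : Finset (Sym2 (Vtx m n))} (hA : A ⊆ honeyEdges m n)
    {x : Vtx m n} (h : Odd (bdeg m n A x)) : bdeg m n A x = 1 ∨ bdeg m n A x = 3 := by
  have := missing_card g hA x
  rw [Nat.odd_iff] at h
  omega

theorem half_sum (g : Good m n) {A : Finset (Sym2 (Vtx m n))} (hA : A ⊆ honeyEdges m n)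
    {x : Vtx m n} (h : Odd (bdeg m n A x)) (p q : WormState m n → Prop)
    [DecidablePred p] [DecidablePred q]
    (f k : Vtx m n → Finset (Sym2 (Vtx m n)) × Vtx m n × Vtx m n)
    (hp : ∀ s, p s → bdeg m n A x = 3 ∧ ∃ w, HoneyAdj m n x w ∧ s.1 = f w)
    (hq : ∀ s, q s → bdeg m n A x = 1 ∧ ∃ w, HoneyAdj m n x w ∧ s(x, w) ∉ A ∧ s.1 = k w) :
    ∑ t, (if p t then (1 / 6 : ℝ) else 0) + ∑ t, (if q t then (1 / 4 : ℝ) else 0) ≤ 1 / 2 := by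
  rcases odd_cases g hA h with h1 | h1
  · have e1 := sum_ite_le p (c := 1 / 6) (by norm_num) ∅ (fun s hs => by
      have := (hp s hs).1
      omega)
    have e2 := sum_ite_le q (c := 1 / 4) (by norm_num)
      (((Nb x).filter fun w => s(x, w) ∉ A).image k) (fun s hs => by
      obtain ⟨_, w, hw, hw2, hw3⟩ := hq s hs
      rw [hw3]
      exact Finset.mem_image_of_mem _ (Finset.mem_filter.2 ⟨mem_Nb.2 hw, hw2⟩))
    have e3 : (((Nb x).filter fun w => s(x, w) ∉ A).image k).card ≤ 2 := by
      refine Finset.card_image_le.trans ?_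
      have := missing_card g hA x
      omega
    have e4 : ((((Nb x).filter fun w => s(x, w) ∉ A).image k).card : ℝ) ≤ 2 := by
      exact_mod_cast e3
    simp only [Finset.card_empty, Nat.cast_zero, mul_zero] at e1
    linarith
  · have e1 := sum_ite_le q (c := 1 / 4) (by norm_num) ∅ (fun s hs => by
      have := (hq s hs).1
      omega)
    have e2 := sum_ite_le p (c := 1 / 6) (by norm_num)
      ((Nb x).image f) (fun s hs => by
      obtain ⟨_, w, hw, hw3⟩ := hp s hs
      rw [hw3]
      exact Finset.mem_image_of_mem _ (mem_Nb.2 hw))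
    have e3 : ((Nb x).image f).card ≤ 3 := by
      refine Finset.card_image_le.trans ?_
      rw [Nb_card g]
    have e4 : (((Nb x).image f).card : ℝ) ≤ 3 := by
      exact_mod_cast e3
    simp only [Finset.card_empty, Nat.cast_zero, mul_zero] at e1
    linarith

theorem row_le (g : Good m n) (s : WormState m n) : ∑ t, Pinf m n s t ≤ 1 := by
  obtain ⟨⟨A, u, v⟩, hs⟩ := s
  have hs' : IsWormState m n A u v := hs
  unfold Pinf
  by_cases h : u = v
  · simp only [h, if_true, Finset.sum_add_distrib]
    have e1 := sum_ite_le (fun t : WormState m n => ∃ v' : Vtx m n, HoneyAdj m n v v' ∧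
        s(v, v') ∉ A ∧ t.1.1 = insert s(v, v') A ∧
        ((t.1.2.1 = v' ∧ t.1.2.2 = v) ∨ (t.1.2.1 = v ∧ t.1.2.2 = v'))) (c := 1 / 6)
        (by norm_num)
        ((((Nb v).filter fun w => s(v, w) ∉ A).image fun w => (insert s(v, w) A, w, v)) ∪
        (((Nb v).filter fun w => s(v, w) ∉ A).image fun w => (insert s(v, w) A, v, w))) (by
        rintro ⟨⟨B, a, b⟩, ht⟩ ⟨w, hw, hw2, h3, h4⟩
        have hm : w ∈ (Nb v).filter fun w => s(v, w) ∉ A :=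
          Finset.mem_filter.2 ⟨mem_Nb.2 hw, hw2⟩
        dsimp only at h3 h4 ⊢
        rcases h4 with ⟨h4, h5⟩ | ⟨h4, h5⟩
        · rw [h3, h4, h5]
          exact Finset.mem_union_left _ (Finset.mem_image.2 ⟨w, hm, rfl⟩)
        · rw [h3, h4, h5]
          exact Finset.mem_union_right _ (Finset.mem_image.2 ⟨w, hm, rfl⟩))
    refine (add_le_add (@sum_ite_le m n _ _ _ (_) _ (by positivity) {(A, v, v)} (by
      rintro t rfl
      exact Finset.mem_singleton_self _)) e1).trans ?_
    rw [Finset.card_singleton, Nat.cast_one, mul_one]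
    have e2 := (Finset.card_union_le
      (((Nb v).filter fun w => s(v, w) ∉ A).image fun w => (insert s(v, w) A, w, v))
      (((Nb v).filter fun w => s(v, w) ∉ A).image fun w => (insert s(v, w) A, v, w))).trans
      (add_le_add Finset.card_image_le Finset.card_image_le)
    have e3 := missing_card g hs'.1 v
    have e2' : ((Finset.card
      ((((Nb v).filter fun w => s(v, w) ∉ A).image fun w => (insert s(v, w) A, w, v)) ∪
      (((Nb v).filter fun w => s(v, w) ∉ A).image fun w => (insert s(v, w) A, v, w))) : ℕ) : ℝ)
      ≤ _ := Nat.cast_le.2 e2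
    have e3' : ((((Nb v).filter fun w => s(v, w) ∉ A).card : ℕ) : ℝ) + (bdeg m n A v : ℝ) = 3 := by
      exact_mod_cast e3
    push_cast at e2'
    linarith
  · simp only [h, if_false, Finset.sum_add_distrib]
    have hu : Odd (bdeg m n A u) := (hs'.2 u).2 ⟨Or.inl rfl, h⟩
    have hv : Odd (bdeg m n A v) := (hs'.2 v).2 ⟨Or.inr rfl, h⟩
    have a1 := half_sum g hs'.1 hu (fun t : WormState m n => bdeg m n A u = 3 ∧ ∃ u' : Vtx m n,
        HoneyAdj m n u u' ∧ s(u, u') ∈ A ∧ t.1.1 = A.erase s(u, u') ∧ t.1.2.1 = u' ∧ t.1.2.2 = v)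
      (fun t : WormState m n => bdeg m n A u = 1 ∧ ∃ u' : Vtx m n,
        HoneyAdj m n u u' ∧ s(u, u') ∉ A ∧ t.1.1 = insert s(u, u') A ∧ t.1.2.1 = u' ∧ t.1.2.2 = v)
      (fun w => (A.erase s(u, w), w, v)) (fun w => (insert s(u, w) A, w, v))
      (by
        rintro ⟨⟨B, a, b⟩, ht⟩ ⟨h1, w, hw, hw2, h3, h4, h5⟩
        exact ⟨h1, w, hw, Prod.ext h3 (Prod.ext h4 h5)⟩)
      (by
        rintro ⟨⟨B, a, b⟩, ht⟩ ⟨h1, w, hw, hw2, h3, h4, h5⟩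
        exact ⟨h1, w, hw, hw2, Prod.ext h3 (Prod.ext h4 h5)⟩)
    have a2 := half_sum g hs'.1 hv (fun t : WormState m n => bdeg m n A v = 3 ∧ ∃ u' : Vtx m n,
        HoneyAdj m n v u' ∧ s(v, u') ∈ A ∧ t.1.1 = A.erase s(v, u') ∧ t.1.2.1 = u ∧ t.1.2.2 = u')
      (fun t : WormState m n => bdeg m n A v = 1 ∧ ∃ u' : Vtx m n,
        HoneyAdj m n v u' ∧ s(v, u') ∉ A ∧ t.1.1 = insert s(v, u') A ∧ t.1.2.1 = u ∧ t.1.2.2 = u')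
      (fun w => (A.erase s(v, w), u, w)) (fun w => (insert s(v, w) A, u, w))
      (by
        rintro ⟨⟨B, a, b⟩, ht⟩ ⟨h1, w, hw, hw2, h3, h4, h5⟩
        exact ⟨h1, w, hw, Prod.ext h3 (Prod.ext h4 h5)⟩)
      (by
        rintro ⟨⟨B, a, b⟩, ht⟩ ⟨h1, w, hw, hw2, h3, h4, h5⟩
        exact ⟨h1, w, hw, hw2, Prod.ext h3 (Prod.ext h4 h5)⟩)
    linarith

/-! ### Reachability of the all-horizontal configuration -/

/-- Number of edges in which a configuration differs from `Hconfig`. -/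
noncomputable def phi (A : Finset (Sym2 (Vtx m n))) : ℕ :=
  (A \ Hconfig m n).card + (Hconfig m n \ A).card

theorem phi_insert_H {A : Finset (Sym2 (Vtx m n))} {e : Sym2 (Vtx m n)} (h : e ∉ A)
    (hH : e ∈ Hconfig m n) : phi (insert e A) + 1 = phi A := by
  unfold phi
  have h1 : insert e A \ Hconfig m n = A \ Hconfig m n := Finset.insert_sdiff_of_mem _ hH
  have h2 : Hconfig m n \ A = insert e (Hconfig m n \ insert e A) := by
    ext x
    simp only [Finset.mem_sdiff, Finset.mem_insert]
    by_cases hx : x = e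
    · subst hx; tauto
    · tauto
  rw [h1, h2, Finset.card_insert_of_notMem (by simp)]
  ring

theorem phi_insert_notH {A : Finset (Sym2 (Vtx m n))} {e : Sym2 (Vtx m n)} (h : e ∉ A)
    (hH : e ∉ Hconfig m n) : phi (insert e A) = phi A + 1 := by
  unfold phi
  have h1 : insert e A \ Hconfig m n = insert e (A \ Hconfig m n) :=
    Finset.insert_sdiff_of_notMem _ hH
  have h2 : Hconfig m n \ insert e A = Hconfig m n \ A := by
    ext x
    simp only [Finset.mem_sdiff, Finset.mem_insert]
    by_cases hx : x = e
    · subst hx; tauto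
    · tauto
  rw [h1, h2, Finset.card_insert_of_notMem (by simp [h])]
  ring

theorem phi_erase_notH {A : Finset (Sym2 (Vtx m n))} {e : Sym2 (Vtx m n)} (h : e ∈ A)
    (hH : e ∉ Hconfig m n) : phi (A.erase e) + 1 = phi A := by
  rw [← phi_insert_notH (Finset.notMem_erase e A) hH, Finset.insert_erase h]

theorem hr_mem (x : Vtx m n) : s(x, hr x) ∈ Hconfig m n :=
  Finset.mem_image.2 ⟨x, Finset.mem_univ _, rfl⟩

theorem hl_mem (x : Vtx m n) : s(x, hl x) ∈ Hconfig m n := by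
  have := hr_mem (hl x)
  rwa [hr_hl, Sym2.eq_swap] at this

theorem ve_notMem (g : Good m n) (x : Vtx m n) : s(x, ve x) ∉ Hconfig m n := by
  intro h
  obtain ⟨p, _, hp⟩ := Finset.mem_image.1 h
  have := ve_snd g x
  rcases Sym2.eq_iff.1 hp with ⟨h1, h2⟩ | ⟨h1, h2⟩
  · rw [← h2, ← h1] at this
    exact this rfl
  · rw [← h1, ← h2] at this
    exact this rfl

theorem H_sub (g : Good m n) : Hconfig m n ⊆ honeyEdges m n := by
  intro e he
  obtain ⟨p, _, rfl⟩ := Finset.mem_image.1 he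
  exact (mem_edges g).2 (adj_hr g p)

theorem H_deg (g : Good m n) (x : Vtx m n) : bdeg m n (Hconfig m n) x = 2 := by
  rw [bdeg_three g (H_sub g), if_pos (hr_mem x), if_pos (hl_mem x), if_neg (ve_notMem g x)]

theorem H_worm (g : Good m n) (v : Vtx m n) : IsWormState m n (Hconfig m n) v v := by
  refine ⟨H_sub g, fun x => ?_⟩
  rw [H_deg g]
  simp

/-- Raw membership. -/
def RK (K : Set (WormState m n)) (A : Finset (Sym2 (Vtx m n))) (u v : Vtx m n) : Prop :=
  ∃ h : IsWormState m n A u v, (⟨(A, u, v), h⟩ : WormState m n) ∈ K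

/-- Closure under transitions. -/
def Cl (K : Set (WormState m n)) : Prop := ∀ s ∈ K, ∀ t, 0 < Pinf m n s t → t ∈ K

variable {K : Set (WormState m n)} {A : Finset (Sym2 (Vtx m n))} {u v : Vtx m n}

theorem mv_u3 (g : Good m n) (hK : Cl K) (h : RK K A u v) (huv : u ≠ v) (hd : bdeg m n A u = 3)
    (w : Vtx m n) (hw : HoneyAdj m n u w) (he : s(u, w) ∈ A) : RK K (A.erase s(u, w)) w v := by
  obtain ⟨hs, hk⟩ := h
  refine ⟨worm_erase g hs hw he, hK _ hk _ ?_⟩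
  refine lt_of_lt_of_le (by norm_num) (P_u3 _ _ huv hd w hw he rfl rfl rfl)

theorem mv_u1 (g : Good m n) (hK : Cl K) (h : RK K A u v) (huv : u ≠ v) (hd : bdeg m n A u = 1)
    (w : Vtx m n) (hw : HoneyAdj m n u w) (he : s(u, w) ∉ A) : RK K (insert s(u, w) A) w v := by
  obtain ⟨hs, hk⟩ := h
  refine ⟨worm_insert g hs hw he, hK _ hk _ ?_⟩
  refine lt_of_lt_of_le (by norm_num) (P_u1 _ _ huv hd w hw he rfl rfl rfl)

theorem mv_v3 (g : Good m n) (hK : Cl K) (h : RK K A u v) (huv : u ≠ v) (hd : bdeg m n A v = 3)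
    (w : Vtx m n) (hw : HoneyAdj m n v w) (he : s(v, w) ∈ A) : RK K (A.erase s(v, w)) u w := by
  obtain ⟨hs, hk⟩ := h
  refine ⟨worm_symm (worm_erase g (worm_symm hs) hw he), hK _ hk _ ?_⟩
  refine lt_of_lt_of_le (by norm_num) (P_v3 _ _ huv hd w hw he rfl rfl rfl)

theorem mv_v1 (g : Good m n) (hK : Cl K) (h : RK K A u v) (huv : u ≠ v) (hd : bdeg m n A v = 1)
    (w : Vtx m n) (hw : HoneyAdj m n v w) (he : s(v, w) ∉ A) : RK K (insert s(v, w) A) u w := by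
  obtain ⟨hs, hk⟩ := h
  refine ⟨worm_symm (worm_insert g (worm_symm hs) hw he), hK _ hk _ ?_⟩
  refine lt_of_lt_of_le (by norm_num) (P_v1 _ _ huv hd w hw he rfl rfl rfl)

theorem mv_open (g : Good m n) (hK : Cl K) (h : RK K A v v)
    (w : Vtx m n) (hw : HoneyAdj m n v w) (he : s(v, w) ∉ A) : RK K (insert s(v, w) A) w v := by
  obtain ⟨hs, hk⟩ := h
  refine ⟨worm_insert g hs hw he, hK _ hk _ ?_⟩
  refine lt_of_lt_of_le (by norm_num) (P_open _ _ rfl w hw he rfl (Or.inl ⟨rfl, rfl⟩))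

theorem greedy (g : Good m n) (hK : Cl K) (h : RK K A u v) (huv : u ≠ v) :
    ∃ B a b, RK K B a b ∧ phi B < phi A := by
  obtain ⟨hs, _⟩ := id h
  have hu : Odd (bdeg m n A u) := (hs.2 u).2 ⟨Or.inl rfl, huv⟩
  have hb := bdeg_three g hs.1 u
  rcases odd_cases g hs.1 hu with h1 | h1
  · by_cases c1 : s(u, hr u) ∈ A
    · have c2 : s(u, hl u) ∉ A := by
        intro c2
        rw [if_pos c1, if_pos c2] at hb
        omega
      have := phi_insert_H c2 (hl_mem u)
      exact ⟨_, _, _, mv_u1 g hK h huv h1 _ (adj_hl g u) c2, by omega⟩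
    · have := phi_insert_H c1 (hr_mem u)
      exact ⟨_, _, _, mv_u1 g hK h huv h1 _ (adj_hr g u) c1, by omega⟩
  · have c3 : s(u, ve u) ∈ A := by
      by_contra c3
      rw [if_neg c3, h1] at hb
      split_ifs at hb <;> omega
    have := phi_erase_notH c3 (ve_notMem g u)
    exact ⟨_, _, _, mv_u3 g hK h huv h1 _ (adj_ve g u) c3, by omega⟩

/-- Moving the merged defect through a full vertex. -/
theorem hop (g : Good m n) (hK : Cl K) (h : RK K A v v) {v' w : Vtx m n}
    (ha : HoneyAdj m n v v') (he : s(v, v') ∉ A) (hd : bdeg m n A v = 2)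
    (hd' : bdeg m n A v' = 2) (hw : HoneyAdj m n v' w) (hwA : s(v', w) ∈ A) :
    RK K A v' v' ∧ RK K A w w := by
  have hvv' := adj_ne g ha
  have hvw' := adj_ne g hw
  have hwv : w ≠ v := by
    rintro rfl
    rw [Sym2.eq_swap] at hwA
    exact he hwA
  have s1 := mv_open g hK h v' ha he
  set B := insert s(v, v') A with hB
  have dB : bdeg m n B v = 3 := by
    rw [hB, bdeg_insert he, hd, if_pos (by simp)]
  have dB' : bdeg m n B v' = 3 := by
    rw [hB, bdeg_insert he, hd', if_pos (by simp)]
  have eB : s(v, v') ∈ B := Finset.mem_insert_self _ _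
  have eB' : s(v', w) ∈ B := Finset.mem_insert_of_mem hwA
  have s2 := mv_v3 g hK s1 hvv'.symm dB v' ha eB
  have hBA : B.erase s(v, v') = A := Finset.erase_insert he
  rw [hBA] at s2
  refine ⟨s2, ?_⟩
  have s3 := mv_u3 g hK s1 hvv'.symm dB' w hw eB'
  set C := B.erase s(v', w) with hC
  have hne : s(v, v') ≠ s(v', w) := fun h' => he (h' ▸ hwA)
  have eC : s(v, v') ∈ C := Finset.mem_erase.2 ⟨hne, eB⟩
  have dC : bdeg m n C v = 3 := by
    have := bdeg_erase eB' v
    rw [if_neg, dB] at this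
    · exact this.symm
    · rw [Sym2.mem_iff]
      tauto
  have s4 := mv_v3 g hK s3 hwv dC v' ha eC
  have hD : C.erase s(v, v') = A.erase s(v', w) := by
    rw [hC, Finset.erase_right_comm, hBA]
  rw [hD] at s4
  have dD : bdeg m n (A.erase s(v', w)) v' = 1 := by
    have := bdeg_erase hwA v'
    rw [if_pos (by simp), hd'] at this
    omega
  have s5 := mv_v1 g hK s4 hvw'.symm dD w hw (Finset.notMem_erase _ _)
  rwa [Finset.insert_erase hwA] at s5

theorem reach (g : Good m n) (hne : K.Nonempty) (hK : Cl K) (v0 : Vtx m n) :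
    RK K (Hconfig m n) v0 v0 := by
  obtain ⟨s, hsK, hmin⟩ := Set.exists_min_image K (fun s => phi s.1.1) (Set.toFinite K) hne
  obtain ⟨⟨A, u, v⟩, hs⟩ := s
  have hs' : IsWormState m n A u v := hs
  have hmin' : ∀ B a b, RK K B a b → phi A ≤ phi B := by
    rintro B a b ⟨h, hk⟩
    exact hmin _ hk
  have hneq : ∀ B a b, RK K B a b → phi B ≤ phi A → a = b := by
    intro B a b h hle
    by_contra hab
    obtain ⟨B', a', b', h', hlt⟩ := greedy g hK h hab
    have := hmin' _ _ _ h'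
    omega
  have huv : u = v := hneq A u v ⟨hs', hsK⟩ le_rfl
  subst huv
  have h0 : RK K A u u := ⟨hs', hsK⟩
  have hev : ∀ x, ¬ Odd (bdeg m n A x) := by
    intro x hx
    exact ((hs'.2 x).1 hx).2 rfl
  -- every merged state with this `A` in `K` is locally horizontal
  have key : ∀ x, RK K A x x → s(x, hr x) ∈ A ∧ s(x, hl x) ∈ A ∧ s(x, ve x) ∉ A := by
    intro x hx
    have c1 : s(x, hr x) ∈ A := by
      by_contra c
      have := phi_insert_H c (hr_mem x)
      have := hmin' _ _ _ (mv_open g hK hx _ (adj_hr g x) c)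
      omega
    have c2 : s(x, hl x) ∈ A := by
      by_contra c
      have := phi_insert_H c (hl_mem x)
      have := hmin' _ _ _ (mv_open g hK hx _ (adj_hl g x) c)
      omega
    refine ⟨c1, c2, fun c3 => hev x ?_⟩
    rw [bdeg_three g hs'.1, if_pos c1, if_pos c2, if_pos c3]
    decide
  have key2 : ∀ x, RK K A x x → s(ve x, hr (ve x)) ∈ A ∧ s(ve x, hl (ve x)) ∈ A := by
    intro x hx
    obtain ⟨c1, c2, c3⟩ := key x hx
    have hx' := mv_open g hK hx _ (adj_ve g x) c3
    have hphi := phi_insert_notH c3 (ve_notMem g x)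
    have hvex : s(ve x, x) ∉ A := by rwa [Sym2.eq_swap]
    have hb := bdeg_three g hs'.1 (ve x)
    rw [ve_ve g, if_neg hvex] at hb
    have hev' := hev (ve x)
    have hxne := adj_ne g (adj_ve g x)
    have d1 : bdeg m n A (ve x) = 0 → bdeg m n (insert s(x, ve x) A) (ve x) = 1 := by
      intro h
      rw [bdeg_insert c3, h, if_pos (by simp)]
    by_contra hcon
    have hz : bdeg m n A (ve x) = 0 := by
      rw [Nat.odd_iff] at hev'
      split_ifs at hb
      · tauto
      all_goals omega
    have nin : ∀ w, HoneyAdj m n (ve x) w → s(ve x, w) ∈ Hconfig m n → w ≠ x →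
        s(ve x, w) ∉ A → False := by
      intro w hw hwH hwx hwA
      have hni : s(ve x, w) ∉ insert s(x, ve x) A := by
        rw [Finset.mem_insert]
        rintro (h | h)
        · rcases Sym2.eq_iff.1 h with ⟨h1, h2⟩ | ⟨h1, h2⟩
          · exact hxne h1.symm
          · exact hwx h2
        · exact hwA h
      have s2 := mv_u1 g hK hx' hxne.symm (d1 hz) w hw hni
      have := phi_insert_H hni hwH
      exact hwx (hneq _ _ _ s2 (by omega))
    have q1 : hr (ve x) ≠ x := by
      have := hr_ne_ve g (ve x)
      rwa [ve_ve g] at this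
    have hr0 : s(ve x, hr (ve x)) ∉ A := by
      intro h
      rw [if_pos h] at hb
      omega
    exact nin _ (adj_hr g _) (hr_mem _) q1 hr0
  have all : ∀ x, RK K A x x := by
    refine conn g _ u h0 ?_
    intro x y hxy hx
    have step : ∀ z, RK K A z z → RK K A (ve z) (ve z) ∧ RK K A (hr (ve z)) (hr (ve z)) ∧
        RK K A (hl (ve z)) (hl (ve z)) := by
      intro z hz
      obtain ⟨c1, c2, c3⟩ := key z hz
      obtain ⟨c4, c5⟩ := key2 z hz
      have d1 : bdeg m n A z = 2 := by
        rw [bdeg_three g hs'.1, if_pos c1, if_pos c2, if_neg c3]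
      have d2 : bdeg m n A (ve z) = 2 := by
        rw [bdeg_three g hs'.1, if_pos c4, if_pos c5, ve_ve g, if_neg]
        rwa [Sym2.eq_swap]
      obtain ⟨r1, r2⟩ := hop g hK hz (adj_ve g z) c3 d1 d2 (adj_hr g _) c4
      exact ⟨r1, r2, (hop g hK hz (adj_ve g z) c3 d1 d2 (adj_hl g _) c5).2⟩
    obtain ⟨r1, -, -⟩ := step x hx
    obtain ⟨r2, r3, r4⟩ := step _ r1
    rw [ve_ve g] at r2 r3 r4
    rcases (adj_iff g x y).1 hxy with rfl | rfl | rfl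
    · exact r3
    · exact r4
    · exact r1
  have hAH : A = Hconfig m n := by
    ext e
    constructor
    · induction e using Sym2.ind with
      | _ x y =>
        intro he
        obtain ⟨c1, c2, c3⟩ := key x (all x)
        rcases (adj_iff g x y).1 ((mem_edges g).1 (hs'.1 he)) with rfl | rfl | rfl
        · exact hr_mem x
        · exact hl_mem x
        · exact absurd he c3
    · intro he
      obtain ⟨p, _, rfl⟩ := Finset.mem_image.1 he
      exact (key p (all p)).1
  rw [← hAH]
  exact all v0

/-! ### The explicit stationary weight -/

/-- The unnormalised stationary weight. -/
noncomputable def mu (A : Finset (Sym2 (Vtx m n))) (u v : Vtx m n) : ℝ :=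
  if ∀ x, x ≠ u → x ≠ v → bdeg m n A x = 2 then
    if u = v then (if bdeg m n A v = 2 then 18 else 0)
    else if bdeg m n A u = 3 ∧ bdeg m n A v = 3 ∧ (Ev u ↔ ¬ Ev v) then
      (if HoneyAdj m n u v then 12 else 9)
    else if bdeg m n A u = 1 ∧ bdeg m n A v = 1 ∧ (Ev u ↔ ¬ Ev v) then
      (if HoneyAdj m n u v ∧ s(u, v) ∉ A then 2 else 4)
    else if bdeg m n A u = 1 ∧ bdeg m n A v = 3 ∧ (Ev u ↔ Ev v) then 6
    else if bdeg m n A u = 3 ∧ bdeg m n A v = 1 ∧ (Ev u ↔ Ev v) then 6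
    else 0
  else 0

theorem mu_nonneg (A : Finset (Sym2 (Vtx m n))) (u v : Vtx m n) : 0 ≤ mu A u v := by
  unfold mu
  split_ifs <;> norm_num

theorem mu_E (h : ∀ x, bdeg m n A x = 2) : mu A v v = 18 := by
  unfold mu
  rw [if_pos (fun x _ _ => h x), if_pos rfl, if_pos (h v)]

theorem mu_33 (h : ∀ x, x ≠ u → x ≠ v → bdeg m n A x = 2) (huv : u ≠ v)
    (h1 : bdeg m n A u = 3) (h2 : bdeg m n A v = 3) (he : Ev u ↔ ¬ Ev v) :
    mu A u v = if HoneyAdj m n u v then 12 else 9 := by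
  unfold mu
  rw [if_pos h, if_neg huv, if_pos ⟨h1, h2, he⟩]

theorem mu_11 (h : ∀ x, x ≠ u → x ≠ v → bdeg m n A x = 2) (huv : u ≠ v)
    (h1 : bdeg m n A u = 1) (h2 : bdeg m n A v = 1) (he : Ev u ↔ ¬ Ev v) :
    mu A u v = if HoneyAdj m n u v ∧ s(u, v) ∉ A then 2 else 4 := by
  unfold mu
  rw [if_pos h, if_neg huv, if_neg (fun h => by omega), if_pos ⟨h1, h2, he⟩]

theorem mu_13 (h : ∀ x, x ≠ u → x ≠ v → bdeg m n A x = 2) (huv : u ≠ v)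
    (h1 : bdeg m n A u = 1) (h2 : bdeg m n A v = 3) (he : Ev u ↔ Ev v) :
    mu A u v = 6 := by
  unfold mu
  rw [if_pos h, if_neg huv, if_neg (fun h => by omega), if_neg (fun h => by omega),
    if_pos ⟨h1, h2, he⟩]

theorem mu_31 (h : ∀ x, x ≠ u → x ≠ v → bdeg m n A x = 2) (huv : u ≠ v)
    (h1 : bdeg m n A u = 3) (h2 : bdeg m n A v = 1) (he : Ev u ↔ Ev v) :
    mu A u v = 6 := by
  unfold mu
  rw [if_pos h, if_neg huv, if_neg (fun h => by omega), if_neg (fun h => by omega),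
    if_neg (fun h => by omega), if_pos ⟨h1, h2, he⟩]

theorem mu_symm (g : Good m n) (A : Finset (Sym2 (Vtx m n))) (u v : Vtx m n) :
    mu A u v = mu A v u := by
  by_cases h : ∀ x, x ≠ u → x ≠ v → bdeg m n A x = 2
  · have h' : ∀ x, x ≠ v → x ≠ u → bdeg m n A x = 2 := fun x h1 h2 => h x h2 h1
    by_cases huv : u = v
    · rw [huv]
    have hvu : v ≠ u := fun h => huv h.symm
    have hadj : HoneyAdj m n u v ↔ HoneyAdj m n v u := ⟨adj_symm g, adj_symm g⟩
    have hev : (Ev u ↔ ¬ Ev v) ↔ (Ev v ↔ ¬ Ev u) := by tauto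
    have hev' : (Ev u ↔ Ev v) ↔ (Ev v ↔ Ev u) := by tauto
    by_cases c1 : bdeg m n A u = 3 ∧ bdeg m n A v = 3 ∧ (Ev u ↔ ¬ Ev v)
    · rw [mu_33 h huv c1.1 c1.2.1 c1.2.2, mu_33 h' hvu c1.2.1 c1.1 (hev.1 c1.2.2)]
      simp only [hadj]
    by_cases c2 : bdeg m n A u = 1 ∧ bdeg m n A v = 1 ∧ (Ev u ↔ ¬ Ev v)
    · rw [mu_11 h huv c2.1 c2.2.1 c2.2.2, mu_11 h' hvu c2.2.1 c2.1 (hev.1 c2.2.2)]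
      simp only [hadj, Sym2.eq_swap (a := u)]
    by_cases c3 : bdeg m n A u = 1 ∧ bdeg m n A v = 3 ∧ (Ev u ↔ Ev v)
    · rw [mu_13 h huv c3.1 c3.2.1 c3.2.2, mu_31 h' hvu c3.2.1 c3.1 (hev'.1 c3.2.2)]
    by_cases c4 : bdeg m n A u = 3 ∧ bdeg m n A v = 1 ∧ (Ev u ↔ Ev v)
    · rw [mu_31 h huv c4.1 c4.2.1 c4.2.2, mu_13 h' hvu c4.2.1 c4.1 (hev'.1 c4.2.2)]
    unfold mu
    rw [if_pos h, if_pos h', if_neg huv, if_neg hvu, if_neg c1, if_neg c2, if_neg c3, if_neg c4,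
      if_neg (fun c => c1 ⟨c.2.1, c.1, hev.2 c.2.2⟩), if_neg (fun c => c2 ⟨c.2.1, c.1, hev.2 c.2.2⟩),
      if_neg (fun c => c4 ⟨c.2.1, c.1, hev'.2 c.2.2⟩), if_neg (fun c => c3 ⟨c.2.1, c.1, hev'.2 c.2.2⟩)]
  · have h' : ¬ ∀ x, x ≠ v → x ≠ u → bdeg m n A x = 2 := fun h' => h fun x h1 h2 => h' x h2 h1
    unfold mu
    rw [if_neg h, if_neg h']

/-- Toggle an edge. -/
noncomputable def tog (A : Finset (Sym2 (Vtx m n))) (e : Sym2 (Vtx m n)) :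
    Finset (Sym2 (Vtx m n)) := if e ∈ A then A.erase e else insert e A

/-- Contribution of the raw triple `r` to the inflow at `t`. -/
noncomputable def GG (t : WormState m n) (r : Finset (Sym2 (Vtx m n)) × Vtx m n × Vtx m n) : ℝ :=
  if h : IsWormState m n r.1 r.2.1 r.2.2 then mu r.1 r.2.1 r.2.2 * Pinf m n ⟨r, h⟩ t else 0

theorem GG_nonneg (t : WormState m n) (r : Finset (Sym2 (Vtx m n)) × Vtx m n × Vtx m n) :
    0 ≤ GG t r := by
  unfold GG
  split_ifs
  · exact mul_nonneg (mu_nonneg _ _ _) (P_nonneg _ _)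
  · exact le_rfl

theorem GG_ge (t : WormState m n) {B : Finset (Sym2 (Vtx m n))} {a b : Vtx m n}
    (h : IsWormState m n B a b) {c : ℝ} (hc : c ≤ Pinf m n ⟨(B, a, b), h⟩ t) :
    mu B a b * c ≤ GG t (B, a, b) := by
  unfold GG
  rw [dif_pos h]
  exact mul_le_mul_of_nonneg_left hc (mu_nonneg _ _ _)

theorem sum_GG_le (t : WormState m n)
    (S : Finset (Finset (Sym2 (Vtx m n)) × Vtx m n × Vtx m n)) :
    ∑ r ∈ S, GG t r ≤ ∑ s : WormState m n, mu s.1.1 s.1.2.1 s.1.2.2 * Pinf m n s t := by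
  have h1 : ∀ s : WormState m n, mu s.1.1 s.1.2.1 s.1.2.2 * Pinf m n s t = GG t s.1 := by
    intro s
    unfold GG
    rw [dif_pos s.2]
  simp only [h1]
  have h2 : ∑ r ∈ S, GG t r =
      ∑ r ∈ S.filter (fun r => IsWormState m n r.1 r.2.1 r.2.2), GG t r := by
    rw [Finset.sum_filter]
    refine Finset.sum_congr rfl fun r _ => ?_
    split_ifs with h
    · rfl
    · unfold GG
      rw [dif_neg h]
  rw [h2, ← Finset.sum_subtype_eq_sum_filter]
  exact Finset.sum_le_sum_of_subset_of_nonneg (Finset.subset_univ _) fun _ _ _ => GG_nonneg _ _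

theorem inflow_ge (g : Good m n) (t : WormState m n) :
    GG t t.1 + ∑ w ∈ Nb t.1.2.1, GG t (tog t.1.1 s(t.1.2.1, w), w, t.1.2.2) +
      ∑ w ∈ Nb t.1.2.2, GG t (tog t.1.1 s(t.1.2.2, w), t.1.2.1, w) ≤
    ∑ s : WormState m n, mu s.1.1 s.1.2.1 s.1.2.2 * Pinf m n s t := by
  obtain ⟨⟨A, u, v⟩, ht⟩ := t
  dsimp only
  set t : WormState m n := ⟨(A, u, v), ht⟩
  have i1 : Set.InjOn (fun w => (tog A s(u, w), w, v)) (Nb u : Set (Vtx m n)) := by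
    intro w _ w' _ h
    exact (Prod.ext_iff.1 (Prod.ext_iff.1 h).2).1
  have i2 : Set.InjOn (fun w => (tog A s(v, w), u, w)) (Nb v : Set (Vtx m n)) := by
    intro w _ w' _ h
    exact (Prod.ext_iff.1 (Prod.ext_iff.1 h).2).2
  rw [← Finset.sum_image (f := GG t) i1, ← Finset.sum_image (f := GG t) i2,
    ← Finset.sum_singleton (GG t) (A, u, v), ← Finset.sum_union, ← Finset.sum_union]
  · exact sum_GG_le t _
  · rw [Finset.disjoint_left]
    intro r hr hr2
    obtain ⟨w, hw, rfl⟩ := Finset.mem_image.1 hr2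
    have hw' := adj_ne g (mem_Nb.1 hw)
    rcases Finset.mem_union.1 hr with h | h
    · have := Finset.mem_singleton.1 h
      exact hw' (Prod.ext_iff.1 (Prod.ext_iff.1 this).2).2.symm
    · obtain ⟨w', hw2, h⟩ := Finset.mem_image.1 h
      have hw3 := adj_ne g (mem_Nb.1 hw2)
      exact hw3 (Prod.ext_iff.1 (Prod.ext_iff.1 h).2).1.symm
  · rw [Finset.disjoint_left]
    intro r hr hr2
    obtain ⟨w, hw, rfl⟩ := Finset.mem_image.1 hr2
    have hw' := adj_ne g (mem_Nb.1 hw)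
    have := Finset.mem_singleton.1 hr
    exact hw' (Prod.ext_iff.1 (Prod.ext_iff.1 this).2).1.symm

/-- Lower bound for the contribution of moving the first defect from `w` to `u`. -/
noncomputable def ph (A : Finset (Sym2 (Vtx m n))) (u v w : Vtx m n) : ℝ :=
  if w = v then (if s(u, w) ∈ A then mu (A.erase s(u, w)) v v / 6 else 0)
  else if s(u, w) ∈ A then mu (A.erase s(u, w)) w v / 4 else mu (insert s(u, w) A) w v / 6

theorem ph_nonneg (A : Finset (Sym2 (Vtx m n))) (u v w : Vtx m n) : 0 ≤ ph A u v w := by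
  unfold ph
  split_ifs
  · exact div_nonneg (mu_nonneg _ _ _) (by norm_num)
  · exact le_rfl
  · exact div_nonneg (mu_nonneg _ _ _) (by norm_num)
  · exact div_nonneg (mu_nonneg _ _ _) (by norm_num)

theorem ph_le_U (g : Good m n) (ht : IsWormState m n A u v) {w : Vtx m n}
    (hw : HoneyAdj m n u w) (hfp : w ≠ v → bdeg m n A w = 2) :
    ph A u v w ≤ GG ⟨(A, u, v), ht⟩ (tog A s(u, w), w, v) := by
  have hsw : s(w, u) = s(u, w) := Sym2.eq_swap
  unfold ph
  by_cases he : s(u, w) ∈ A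
  · have hT : tog A s(u, w) = A.erase s(u, w) := if_pos he
    have hI : A = insert s(w, u) (A.erase s(u, w)) := by rw [hsw, Finset.insert_erase he]
    have hni : s(w, u) ∉ A.erase s(u, w) := by rw [hsw]; exact Finset.notMem_erase _ _
    have hws := worm_erase g ht hw he
    rw [hT]
    split_ifs with hwv
    · subst hwv
      rw [div_eq_mul_one_div]
      exact GG_ge _ hws (P_open _ _ rfl u (adj_symm g hw) hni hI (Or.inl ⟨rfl, rfl⟩))
    · rw [div_eq_mul_one_div]
      have hd : bdeg m n (A.erase s(u, w)) w = 1 := by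
        have := bdeg_erase he w
        rw [if_pos (by simp), hfp hwv] at this
        omega
      exact GG_ge _ hws (P_u1 _ _ hwv hd u (adj_symm g hw) hni hI rfl rfl)
  · have hT : tog A s(u, w) = insert s(u, w) A := if_neg he
    have hI : A = (insert s(u, w) A).erase s(w, u) := by rw [hsw, Finset.erase_insert he]
    have hni : s(w, u) ∈ insert s(u, w) A := by rw [hsw]; exact Finset.mem_insert_self _ _
    have hws := worm_insert g ht hw he
    rw [hT, if_neg he, if_neg he]
    split_ifs with hwv
    · exact GG_nonneg _ _
    · rw [div_eq_mul_one_div]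
      have hd : bdeg m n (insert s(u, w) A) w = 3 := by
        rw [bdeg_insert he, hfp hwv, if_pos (by simp)]
      exact GG_ge _ hws (P_u3 _ _ hwv hd u (adj_symm g hw) hni hI rfl rfl)

theorem ph_le_V (g : Good m n) (ht : IsWormState m n A u v) {w : Vtx m n}
    (hw : HoneyAdj m n v w) (hfp : w ≠ u → bdeg m n A w = 2) :
    ph A v u w ≤ GG ⟨(A, u, v), ht⟩ (tog A s(v, w), u, w) := by
  have hsw : s(w, v) = s(v, w) := Sym2.eq_swap
  unfold ph
  by_cases he : s(v, w) ∈ A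
  · have hT : tog A s(v, w) = A.erase s(v, w) := if_pos he
    have hI : A = insert s(w, v) (A.erase s(v, w)) := by rw [hsw, Finset.insert_erase he]
    have hni : s(w, v) ∉ A.erase s(v, w) := by rw [hsw]; exact Finset.notMem_erase _ _
    have hws := worm_symm (worm_erase g (worm_symm ht) hw he)
    rw [hT]
    split_ifs with hwv
    · subst hwv
      rw [div_eq_mul_one_div]
      exact GG_ge _ hws (P_open _ _ rfl v (adj_symm g hw) hni hI (Or.inr ⟨rfl, rfl⟩))
    · rw [div_eq_mul_one_div, mu_symm g]
      have hd : bdeg m n (A.erase s(v, w)) w = 1 := by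
        have := bdeg_erase he w
        rw [if_pos (by simp), hfp hwv] at this
        omega
      exact GG_ge _ hws (P_v1 _ _ (Ne.symm hwv) hd v (adj_symm g hw) hni hI rfl rfl)
  · have hT : tog A s(v, w) = insert s(v, w) A := if_neg he
    have hI : A = (insert s(v, w) A).erase s(w, v) := by rw [hsw, Finset.erase_insert he]
    have hni : s(w, v) ∈ insert s(v, w) A := by rw [hsw]; exact Finset.mem_insert_self _ _
    have hws := worm_symm (worm_insert g (worm_symm ht) hw he)
    rw [hT, if_neg he, if_neg he]
    split_ifs with hwv
    · exact GG_nonneg _ _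
    · rw [div_eq_mul_one_div, mu_symm g]
      have hd : bdeg m n (insert s(v, w) A) w = 3 := by
        rw [bdeg_insert he, hfp hwv, if_pos (by simp)]
      exact GG_ge _ hws (P_v3 _ _ (Ne.symm hwv) hd v (adj_symm g hw) hni hI rfl rfl)

theorem ins_fp (h : ∀ x, x ≠ u → x ≠ v → bdeg m n A x = 2) (hu : u ≠ v → bdeg m n A u = 1)
    {w : Vtx m n} (he : s(u, w) ∉ A) :
    ∀ x, x ≠ w → x ≠ v → bdeg m n (insert s(u, w) A) x = 2 := by
  intro x h1 h2
  rw [bdeg_insert he]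
  by_cases hx : x = u
  · subst hx
    rw [hu h2, if_pos (by simp)]
  · rw [h x hx h2, if_neg]
    rw [Sym2.mem_iff]
    tauto

theorem era_fp (h : ∀ x, x ≠ u → x ≠ v → bdeg m n A x = 2) (hu : u ≠ v → bdeg m n A u = 3)
    {w : Vtx m n} (he : s(u, w) ∈ A) :
    ∀ x, x ≠ w → x ≠ v → bdeg m n (A.erase s(u, w)) x = 2 := by
  intro x h1 h2
  have hb := bdeg_erase he x
  by_cases hx : x = u
  · subst hx
    rw [hu h2, if_pos (by simp)] at hb
    omega
  · rw [h x hx h2, if_neg] at hb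
    · omega
    · rw [Sym2.mem_iff]
      tauto

theorem ins_deg {w x : Vtx m n} (he : s(u, w) ∉ A) (hx : x = u ∨ x = w) :
    bdeg m n (insert s(u, w) A) x = bdeg m n A x + 1 := by
  rw [bdeg_insert he, if_pos (by simpa using hx)]

theorem era_deg {w x : Vtx m n} (he : s(u, w) ∈ A) (hx : x = u ∨ x = w) :
    bdeg m n A x = bdeg m n (A.erase s(u, w)) x + 1 := by
  rw [bdeg_erase he, if_pos (by simpa using hx)]

theorem ins_deg' {w x : Vtx m n} (he : s(u, w) ∉ A) (hx : x ≠ u) (hx' : x ≠ w) :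
    bdeg m n (insert s(u, w) A) x = bdeg m n A x := by
  rw [bdeg_insert he, if_neg (by simp [hx, hx']), add_zero]

theorem era_deg' {w x : Vtx m n} (he : s(u, w) ∈ A) (hx : x ≠ u) (hx' : x ≠ w) :
    bdeg m n (A.erase s(u, w)) x = bdeg m n A x := by
  rw [bdeg_erase he, if_neg (by simp [hx, hx']), add_zero]

theorem full_mem (g : Good m n) (hA : A ⊆ honeyEdges m n) (hd : bdeg m n A u = 3) {w : Vtx m n}
    (hw : HoneyAdj m n u w) : s(u, w) ∈ A := by
  by_contra h
  have h1 := missing_card g hA u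
  have h2 : 0 < ((Nb u).filter fun w => s(u, w) ∉ A).card :=
    Finset.card_pos.2 ⟨w, Finset.mem_filter.2 ⟨mem_Nb.2 hw, h⟩⟩
  omega

theorem sum_E (g : Good m n) (hA : A ⊆ honeyEdges m n) (h : ∀ x, bdeg m n A x = 2) :
    ∑ w ∈ Nb v, ph A v v w = 3 := by
  have hval : ∀ w ∈ Nb v, ph A v v w = 1 / 2 + if s(v, w) ∉ A then 3 / 2 else 0 := by
    intro w hw
    have hadj := mem_Nb.1 hw
    have hne := adj_ne g hadj
    have hev := adj_ev g hadj
    unfold ph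
    rw [if_neg hne.symm]
    by_cases he : s(v, w) ∈ A
    · have hswp : s(w, v) = s(v, w) := Sym2.eq_swap
      have d1 := era_deg he (x := v) (Or.inl rfl)
      have d2 := era_deg he (x := w) (Or.inr rfl)
      rw [h] at d1 d2
      rw [if_pos he, mu_11 (era_fp (fun x _ _ => h x) (fun h' => absurd rfl h') he) hne.symm
        (by omega) (by omega) hev,
        if_pos ⟨adj_symm g hadj, by rw [hswp]; exact Finset.notMem_erase _ _⟩, if_neg (by tauto)]
      norm_num
    · have d1 := ins_deg he (x := v) (Or.inl rfl)
      have d2 := ins_deg he (x := w) (Or.inr rfl)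
      rw [h] at d1 d2
      rw [if_neg he, mu_33 (ins_fp (fun x _ _ => h x) (fun h' => absurd rfl h') he) hne.symm
        d2 d1 hev, if_pos (adj_symm g hadj), if_pos he]
      norm_num
  rw [Finset.sum_congr rfl hval, Finset.sum_add_distrib, Finset.sum_const, Nb_card g,
    ← Finset.sum_filter, Finset.sum_const]
  have := missing_card g hA v
  rw [h] at this
  have h1 : ((Nb v).filter fun w => s(v, w) ∉ A).card = 1 := by omega
  rw [h1]
  norm_num

theorem sum_33 (g : Good m n) (hA : A ⊆ honeyEdges m n)
    (h : ∀ x, x ≠ u → x ≠ v → bdeg m n A x = 2) (huv : u ≠ v)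
    (h1 : bdeg m n A u = 3) (h2 : bdeg m n A v = 3) (he : Ev u ↔ ¬ Ev v) :
    ∑ w ∈ Nb u, ph A u v w = (if HoneyAdj m n u v then 12 else 9) / 2 := by
  have hval : ∀ w ∈ Nb u, ph A u v w = 3 / 2 + if w = v then 3 / 2 else 0 := by
    intro w hw
    have hadj := mem_Nb.1 hw
    have hne := adj_ne g hadj
    have hev := adj_ev g hadj
    have hm := full_mem g hA h1 hadj
    have fp := era_fp h (fun _ => h1) hm
    unfold ph
    by_cases hwv : w = v
    · subst hwv
      rw [if_pos rfl, if_pos hm, if_pos rfl, mu_E]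
      · norm_num
      · intro x
        by_cases hx : x = w
        · subst hx
          have := era_deg hm (x := x) (Or.inr rfl)
          omega
        · exact fp x hx hx
    · have d2 := era_deg hm (x := w) (Or.inr rfl)
      rw [h w hne.symm hwv] at d2
      have d1 := era_deg' hm (x := v) huv.symm (fun h => hwv h.symm)
      rw [if_neg hwv, if_pos hm, if_neg hwv, mu_13 fp hwv (by omega) (by omega) (by tauto)]
      norm_num
  rw [Finset.sum_congr rfl hval, Finset.sum_add_distrib, Finset.sum_const, Nb_card g,
    Finset.sum_ite_eq' (Nb u)]
  simp only [mem_Nb]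
  split_ifs <;> norm_num

theorem sum_11 (g : Good m n) (hA : A ⊆ honeyEdges m n)
    (h : ∀ x, x ≠ u → x ≠ v → bdeg m n A x = 2) (huv : u ≠ v)
    (h1 : bdeg m n A u = 1) (h2 : bdeg m n A v = 1) (he : Ev u ↔ ¬ Ev v) :
    (if HoneyAdj m n u v ∧ s(u, v) ∉ A then 2 else 4) / 2 ≤ ∑ w ∈ Nb u, ph A u v w := by
  have hval : ∀ w ∈ Nb u, (if s(u, w) ∉ A then 1 else 0) -
      (if w = v then (if s(u, v) ∉ A then 1 else 0) else 0) ≤ ph A u v w := by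
    intro w hw
    have hadj := mem_Nb.1 hw
    have hne := adj_ne g hadj
    have hev := adj_ev g hadj
    by_cases hwv : w = v
    · subst hwv
      rw [if_pos rfl, sub_self]
      exact ph_nonneg _ _ _ _
    · rw [if_neg hwv, sub_zero]
      by_cases hm : s(u, w) ∉ A
      · rw [if_pos hm]
        unfold ph
        have d2 := ins_deg hm (x := w) (Or.inr rfl)
        rw [h w hne.symm hwv] at d2
        have d1 := ins_deg' hm (x := v) huv.symm (fun h => hwv h.symm)
        rw [if_neg hwv, if_neg hm, mu_31 (ins_fp h (fun _ => h1) hm) hwv d2 (by omega)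
          (by tauto)]
        norm_num
      · rw [if_neg hm]
        exact ph_nonneg _ _ _ _
  refine le_trans ?_ (Finset.sum_le_sum hval)
  rw [Finset.sum_sub_distrib, ← Finset.sum_filter, Finset.sum_const, Finset.sum_ite_eq' (Nb u)]
  have := missing_card g hA u
  have hc : ((Nb u).filter fun w => s(u, w) ∉ A).card = 2 := by omega
  rw [hc]
  simp only [mem_Nb]
  split_ifs <;> first | (exfalso; tauto) | norm_num

theorem sum_13 (g : Good m n) (hA : A ⊆ honeyEdges m n)
    (h : ∀ x, x ≠ u → x ≠ v → bdeg m n A x = 2) (huv : u ≠ v)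
    (h1 : bdeg m n A u = 1) (h2 : bdeg m n A v = 3) (he : Ev u ↔ Ev v) :
    6 ≤ ∑ w ∈ Nb u, ph A u v w + ∑ w ∈ Nb v, ph A v u w := by
  have hval : ∀ w ∈ Nb u, (if s(u, w) ∉ A then 3 / 2 else 0) +
      (if s(u, w) ∉ A ∧ HoneyAdj m n w v then 1 / 2 else 0) ≤ ph A u v w := by
    intro w hw
    have hadj := mem_Nb.1 hw
    have hne := adj_ne g hadj
    have hev := adj_ev g hadj
    have hwv : w ≠ v := by
      rintro rfl
      tauto
    by_cases hm : s(u, w) ∉ A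
    · unfold ph
      have d2 := ins_deg hm (x := w) (Or.inr rfl)
      rw [h w hne.symm hwv] at d2
      have d1 := ins_deg' hm (x := v) huv.symm hwv.symm
      rw [if_neg hwv, if_neg hm, mu_33 (ins_fp h (fun _ => h1) hm) hwv d2 (by omega)
          (by tauto), if_pos hm]
      by_cases hq : HoneyAdj m n w v
      · rw [if_pos ⟨hm, hq⟩, if_pos hq]; norm_num
      · rw [if_neg (fun h => hq h.2), if_neg hq]; norm_num
    · rw [if_neg hm, if_neg (fun h => hm h.1), add_zero]
      exact ph_nonneg _ _ _ _
  have hval2 : ∀ w ∈ Nb v, 1 - (if s(u, w) ∉ A ∧ HoneyAdj m n u w then 1 / 2 else 0)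
      ≤ ph A v u w := by
    intro w hw
    have hadj := mem_Nb.1 hw
    have hne := adj_ne g hadj
    have hev := adj_ev g hadj
    have hwu : w ≠ u := by
      rintro rfl
      tauto
    have hm := full_mem g hA h2 hadj
    have d2 := era_deg hm (x := w) (Or.inr rfl)
    rw [h w hwu hne.symm] at d2
    have d1 := era_deg' hm (x := u) huv hwu.symm
    unfold ph
    rw [if_neg hwu, if_pos hm, mu_11 (era_fp (fun x a b => h x b a) (fun _ => h2) hm) hwu
      (by omega) (by omega) (by tauto)]
    by_cases hq : s(u, w) ∉ A ∧ HoneyAdj m n u w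
    · rw [if_pos hq]
      split_ifs <;> norm_num
    · rw [if_neg hq, if_neg]
      · norm_num
      · rintro ⟨q1, q2⟩
        refine hq ⟨fun q3 => q2 (Finset.mem_erase.2 ⟨?_, ?_⟩), adj_symm g q1⟩
        · intro q4
          rcases Sym2.eq_iff.1 q4 with ⟨e1, e2⟩ | ⟨e1, e2⟩
          · exact hne e1.symm
          · exact huv e2
        · rwa [Sym2.eq_swap]
  refine le_trans ?_ (add_le_add (Finset.sum_le_sum hval) (Finset.sum_le_sum hval2))
  rw [Finset.sum_add_distrib, Finset.sum_sub_distrib, ← Finset.sum_filter, Finset.sum_const,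
    Finset.sum_const, Nb_card g, ← Finset.sum_filter, ← Finset.sum_filter]
  have hset : (Nb u).filter (fun w => s(u, w) ∉ A ∧ HoneyAdj m n w v) =
      (Nb v).filter (fun w => s(u, w) ∉ A ∧ HoneyAdj m n u w) := by
    ext w
    simp only [Finset.mem_filter, mem_Nb]
    constructor
    · rintro ⟨a, b, c⟩
      exact ⟨adj_symm g c, b, a⟩
    · rintro ⟨a, b, c⟩
      exact ⟨c, b, adj_symm g a⟩
  have := missing_card g hA u
  have hc : ((Nb u).filter fun w => s(u, w) ∉ A).card = 2 := by omega
  rw [hset, hc]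
  simp only [nsmul_eq_mul]
  push_cast
  linarith

theorem mu_super (g : Good m n) (t : WormState m n) : mu t.1.1 t.1.2.1 t.1.2.2 ≤
    ∑ s : WormState m n, mu s.1.1 s.1.2.1 s.1.2.2 * Pinf m n s t := by
  have hin := inflow_ge g t
  obtain ⟨⟨A, u, v⟩, ht⟩ := t
  have ht' : IsWormState m n A u v := ht
  dsimp only at hin ⊢
  refine le_trans ?_ hin
  have hself := GG_nonneg (⟨(A, u, v), ht⟩ : WormState m n) (A, u, v)
  by_cases h : ∀ x, x ≠ u → x ≠ v → bdeg m n A x = 2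
  swap
  · unfold mu
    rw [if_neg h]
    exact add_nonneg (add_nonneg hself (Finset.sum_nonneg fun _ _ => GG_nonneg _ _))
      (Finset.sum_nonneg fun _ _ => GG_nonneg _ _)
  have hU : ∑ w ∈ Nb u, ph A u v w ≤
      ∑ w ∈ Nb u, GG ⟨(A, u, v), ht⟩ (tog A s(u, w), w, v) :=
    Finset.sum_le_sum fun w hw => ph_le_U g ht' (mem_Nb.1 hw)
      (h w (adj_ne g (mem_Nb.1 hw)).symm)
  have hV : ∑ w ∈ Nb v, ph A v u w ≤
      ∑ w ∈ Nb v, GG ⟨(A, u, v), ht⟩ (tog A s(v, w), u, w) :=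
    Finset.sum_le_sum fun w hw => ph_le_V g ht' (mem_Nb.1 hw)
      (fun h' => h w h' (adj_ne g (mem_Nb.1 hw)).symm)
  by_cases huv : u = v
  · subst huv
    have hd : bdeg m n A u = 2 ∨ bdeg m n A u ≠ 2 := em _
    rcases hd with hd | hd
    · have hall : ∀ x, bdeg m n A x = 2 := by
        intro x
        by_cases hx : x = u
        · rw [hx, hd]
        · exact h x hx hx
      have e := sum_E g ht'.1 hall (v := u)
      have hs := GG_ge (⟨(A, u, u), ht⟩ : WormState m n) ht' (P_self ⟨(A, u, u), ht⟩ rfl)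
      dsimp only at hs
      rw [mu_E hall, hd] at hs
      rw [mu_E hall]
      push_cast at hs
      linarith
    · have : mu A u u = 0 := by
        unfold mu
        rw [if_pos h, if_pos rfl, if_neg hd]
      rw [this]
      exact add_nonneg (add_nonneg hself (Finset.sum_nonneg fun _ _ => GG_nonneg _ _))
        (Finset.sum_nonneg fun _ _ => GG_nonneg _ _)
  suffices hh : mu A u v ≤ ∑ w ∈ Nb u, ph A u v w + ∑ w ∈ Nb v, ph A v u w by linarith
  have h' : ∀ x, x ≠ v → x ≠ u → bdeg m n A x = 2 := fun x a b => h x b a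
  have hvu : v ≠ u := fun h => huv h.symm
  have hswap := mu_symm g A u v
  by_cases c1 : bdeg m n A u = 3 ∧ bdeg m n A v = 3 ∧ (Ev u ↔ ¬ Ev v)
  · have c1' : Ev v ↔ ¬ Ev u := by tauto
    have a1 := sum_33 g ht'.1 h huv c1.1 c1.2.1 c1.2.2
    have a2 := sum_33 g ht'.1 h' hvu c1.2.1 c1.1 c1'
    rw [← mu_33 h huv c1.1 c1.2.1 c1.2.2] at a1
    rw [← mu_33 h' hvu c1.2.1 c1.1 c1'] at a2
    linarith
  by_cases c2 : bdeg m n A u = 1 ∧ bdeg m n A v = 1 ∧ (Ev u ↔ ¬ Ev v)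
  · have c2' : Ev v ↔ ¬ Ev u := by tauto
    have a1 := sum_11 g ht'.1 h huv c2.1 c2.2.1 c2.2.2
    have a2 := sum_11 g ht'.1 h' hvu c2.2.1 c2.1 c2'
    rw [← mu_11 h huv c2.1 c2.2.1 c2.2.2] at a1
    rw [← mu_11 h' hvu c2.2.1 c2.1 c2'] at a2
    linarith
  by_cases c3 : bdeg m n A u = 1 ∧ bdeg m n A v = 3 ∧ (Ev u ↔ Ev v)
  · rw [mu_13 h huv c3.1 c3.2.1 c3.2.2]
    exact sum_13 g ht'.1 h huv c3.1 c3.2.1 c3.2.2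
  by_cases c4 : bdeg m n A u = 3 ∧ bdeg m n A v = 1 ∧ (Ev u ↔ Ev v)
  · rw [mu_31 h huv c4.1 c4.2.1 c4.2.2, add_comm]
    exact sum_13 g ht'.1 h' hvu c4.2.1 c4.1 c4.2.2.symm
  have : mu A u v = 0 := by
    unfold mu
    rw [if_pos h, if_neg huv, if_neg c1, if_neg c2, if_neg c3, if_neg c4]
  rw [this]
  exact add_nonneg (Finset.sum_nonneg fun _ _ => ph_nonneg _ _ _ _)
    (Finset.sum_nonneg fun _ _ => ph_nonneg _ _ _ _)

theorem card_states (m n : ℕ) [NeZero m] [NeZero n] :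
    (Finset.univ.filter (fun tt : WormState m n =>
            (∀ x, bdeg m n tt.1.1 x = 2) ∧ tt.1.2.1 = tt.1.2.2)).card =
      Fintype.card (Vtx m n) * (Finset.univ.filter (fun A : Finset (Sym2 (Vtx m n)) =>
                A ⊆ honeyEdges m n ∧ ∀ x, bdeg m n A x = 2)).card := by
  rw [← Finset.card_univ, ← Finset.card_product]
  refine Finset.card_bij (fun tt _ => (tt.1.2.1, tt.1.1)) ?_ ?_ ?_
  · intro tt h
    simp only [Finset.mem_filter, Finset.mem_univ, true_and] at h
    simp only [Finset.mem_product, Finset.mem_filter, Finset.mem_univ, true_and]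
    exact ⟨tt.2.1, h.1⟩
  · intro a ha b hb h
    simp only [Finset.mem_filter, Finset.mem_univ, true_and] at ha hb
    obtain ⟨h1, h2⟩ := Prod.ext_iff.1 h
    refine Subtype.ext (Prod.ext h2 (Prod.ext h1 ?_))
    rw [← ha.2, ← hb.2]
    exact h1
  · rintro ⟨v, A⟩ h
    simp only [Finset.mem_product, Finset.mem_filter, Finset.mem_univ, true_and] at h
    refine ⟨⟨(A, v, v), h.1, fun x => ?_⟩, ?_, rfl⟩
    · simp [h.2 x]
    · simp only [Finset.mem_filter, Finset.mem_univ, true_and]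
      exact ⟨h.2, trivial⟩

end Helpers

theorem uniform_prop (m n : ℕ) [NeZero m] [NeZero n]
    (hm : Even m) (hn : Even n) (hm4 : 4 ≤ m) (hn4 : 4 ≤ n)
    (ν : WormState m n → ℝ) (hν0 : ∀ st, 0 ≤ ν st) (hν1 : ∑ st : WormState m n, ν st = 1)
    (hstat : ∀ tt : WormState m n, ∑ st : WormState m n, ν st * Pinf m n st tt = ν tt) :
    ∃ lam : ℝ, 0 < lam ∧
      (∀ st : WormState m n, (∀ x, bdeg m n st.1.1 x = 2) → st.1.2.1 = st.1.2.2 →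
        ν st = lam) ∧
      (∀ st : WormState m n, (∀ x, bdeg m n st.1.1 x = 2) → st.1.2.1 = st.1.2.2 →
        ν st / (∑ tt ∈ Finset.univ.filter (fun tt : WormState m n =>
            (∀ x, bdeg m n tt.1.1 x = 2) ∧ tt.1.2.1 = tt.1.2.2), ν tt)
          = 1 / ((Fintype.card (Vtx m n) : ℝ) *
              ((Finset.univ.filter (fun A : Finset (Sym2 (Vtx m n)) =>
                A ⊆ honeyEdges m n ∧ ∀ x, bdeg m n A x = 2)).card : ℝ))) := by
  have g : Good m n := ⟨hm, hn, hm4, hn4⟩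
  set s0 : WormState m n := ⟨(Hconfig m n, 0, 0), H_worm g 0⟩ with hs0
  have hmu0 : mu s0.1.1 s0.1.2.1 s0.1.2.2 = 18 := mu_E (H_deg g)
  have hU := unique_stat (Pinf m n) P_nonneg (row_le g)
    (fun s : WormState m n => mu s.1.1 s.1.2.1 s.1.2.2) ν (fun s => mu_nonneg _ _ _)
    (mu_super g) hstat s0 (by rw [hmu0]; norm_num)
    (fun K hne hK => (reach g hne hK 0).2)
  set c := ν s0 / mu s0.1.1 s0.1.2.1 s0.1.2.2 with hc
  have hc0 : 0 ≤ c := div_nonneg (hν0 _) (mu_nonneg _ _ _)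
  have hcpos : 0 < c := by
    rcases hc0.lt_or_eq with h | h
    · exact h
    · exfalso
      simp only [hU, ← h, zero_mul, Finset.sum_const_zero] at hν1
      exact zero_ne_one hν1
  have hval : ∀ st : WormState m n, (∀ x, bdeg m n st.1.1 x = 2) → st.1.2.1 = st.1.2.2 →
      ν st = c * 18 := by
    intro st h1 h2
    rw [hU st]
    rw [h2, mu_E h1]
  refine ⟨c * 18, by positivity, hval, ?_⟩
  intro st h1 h2
  rw [Finset.sum_congr rfl (fun tt htt => hval tt (Finset.mem_filter.1 htt).2.1
    (Finset.mem_filter.1 htt).2.2), Finset.sum_const, card_states, hval st h1 h2, nsmul_eq_mul]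
  have hpos : c * 18 ≠ 0 := by positivity
  push_cast
  rw [div_mul_cancel_right₀ hpos, one_div]

end FPL
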